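/- arXiv:2212.07198 — 3 statements merged into one kernel-verified Lean document; each statement's English description precedes it below -/
import Mathlib

section
/- Let p be a prime number. Then: (1) T_p is even if and only if p ≡ 3 (mod 4); (2) T_p is divisible by 4 if and only if p ≡ 7 (mod 8). -/
/-- The sequence of complete quotients of the continued fraction of `x`:
`α₀ = x`, `α_{k+1} = 1/(αₖ - ⌊αₖ⌋)`. -/
noncomputable def cfAlpha (x : ℝ) : ℕ → ℝ
  | 0 => x
  | k + 1 => 1 / (cfAlpha x k - (⌊cfAlpha x k⌋ : ℝ))

/-- The partial quotients of the continued fraction of `x`: `aₖ = ⌊αₖ⌋`. -/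
noncomputable def cfA (x : ℝ) (k : ℕ) : ℤ :=
  ⌊cfAlpha x k⌋

/-- The length of the minimal period of the continued fraction of `x`:
the least `l > 0` with `a_{k+l} = a_k` for all `k ≥ 1`. -/
noncomputable def cfPeriod (x : ℝ) : ℕ :=
  sInf {l : ℕ | 0 < l ∧ ∀ k : ℕ, 1 ≤ k → cfA x (k + l) = cfA x k}

/-!
Write `α̅` for the conjugate of a quadratic irrational `α`. On the finite set of reduced
irrationals `(P + √D) / Q` the maps `μ α = ⌊α⌋ - α̅` and `ν α = -1 / α̅` are involutions, and
`ν ∘ μ` is the continued fraction step `α ↦ 1 / (α - ⌊α⌋)`. The period of `√D` is the period of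
`α = ⌊√D⌋ + √D` under this step, and `μ α = α`, so the orbit of `α` has a dihedral symmetry and the
element half way round it is fixed by `μ` or by `ν`. If the period is odd, it is fixed by `ν` and
exhibits `D` as a sum of two squares. If the period is `2 * m`, it is fixed by `μ`; when `D` is
prime this forces `Q = 2`, and the convergents give `u ^ 2 - D * v ^ 2 = (-1) ^ m * 2`, which
determines `D` modulo `8`.
-/

open Function

/-! ### Complete quotients -/

lemma cfAlpha_cfAlpha (x : ℝ) (m k : ℕ) : cfAlpha (cfAlpha x m) k = cfAlpha x (m + k) := by
  induction k with
  | zero => rfl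
  | succ k ih => rw [← add_assoc, cfAlpha, cfAlpha, ih]

lemma cfA_cfAlpha (x : ℝ) (m k : ℕ) : cfA (cfAlpha x m) k = cfA x (m + k) := by
  rw [cfA, cfA, cfAlpha_cfAlpha]

lemma cfAlpha_one (x : ℝ) : cfAlpha x 1 = (Int.fract x)⁻¹ :=
  one_div _

lemma convergent_eq_of_cfA_eq {x y : ℝ} (h : cfA x = cfA y) (n : ℕ) :
    x.convergent n = y.convergent n := by
  have h_floor : ⌊x⌋ = ⌊y⌋ := congrFun h 0
  induction n generalizing x y with
  | zero => rw [Real.convergent_zero, Real.convergent_zero, h_floor]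
  | succ n ih =>
    have h_tail : cfA (Int.fract x)⁻¹ = cfA (Int.fract y)⁻¹ := by
      funext k
      rw [← cfAlpha_one, ← cfAlpha_one, cfA_cfAlpha, cfA_cfAlpha, h]
    rw [Real.convergent_succ, Real.convergent_succ, h_floor, ih h_tail (congrFun h_tail 0)]

theorem cfA_injective : Injective cfA := by
  intro x y h
  have h_convs : (GenContFract.of x).convs = (GenContFract.of y).convs := by
    funext n
    rw [Real.convs_eq_convergent, Real.convs_eq_convergent, convergent_eq_of_cfA_eq h]
  have hx := GenContFract.of_convergence x
  rw [h_convs] at hx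
  exact tendsto_nhds_unique hx (GenContFract.of_convergence y)

lemma forall_cfA_add_eq_iff (x : ℝ) (l : ℕ) :
    (∀ k, 1 ≤ k → cfA x (k + l) = cfA x k) ↔ cfAlpha x (l + 1) = cfAlpha x 1 := by
  refine ⟨fun h => cfA_injective (funext fun k => ?_), fun h k hk => ?_⟩
  · rw [cfA_cfAlpha, cfA_cfAlpha, ← h (1 + k) (by omega)]
    congr 1
    omega
  · obtain ⟨j, rfl⟩ := Nat.exists_eq_add_of_le hk
    rw [← cfA_cfAlpha x 1 j, ← h, cfA_cfAlpha]
    congr 1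
    omega

/-! ### Periodic points of a product of two involutions -/

lemma minimalPeriod_eq_sInf {α : Type*} (f : α → α) (x : α) :
    minimalPeriod f x = sInf {n | 0 < n ∧ IsPeriodicPt f n x} := by
  by_cases hx : x ∈ periodicPts f
  · refine le_antisymm ?_ (Nat.sInf_le ⟨minimalPeriod_pos_of_mem_periodicPts hx,
      isPeriodicPt_minimalPeriod f x⟩)
    have h_mem := Nat.sInf_mem (mem_periodicPts.mp hx)
    exact h_mem.2.minimalPeriod_le h_mem.1
  · have h_empty : {n | 0 < n ∧ IsPeriodicPt f n x} = ∅ :=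
      Set.eq_empty_of_forall_notMem fun n hn => hx (mk_mem_periodicPts hn.1 hn.2)
    rw [h_empty, Nat.sInf_empty, minimalPeriod_eq_zero_of_notMem_periodicPts hx]

section Involutions

variable {α : Type*}

lemma iterate_apply_iterate {f σ : α → α} (h : ∀ x, f (σ (f x)) = σ x) (n : ℕ) (x : α) :
    f^[n] (σ (f^[n] x)) = σ x := by
  induction n with
  | zero => rfl
  | succ n ih => rw [iterate_succ_apply, iterate_succ_apply' f, h, ih]

variable {μ ν : α → α} {x : α} {m : ℕ}

lemma isFixedPt_iterate_of_isPeriodicPt_two_mul (hμ : Involutive μ) (hν : Involutive ν)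
    (hx : IsFixedPt μ x) (hm : IsPeriodicPt (ν ∘ μ) (2 * m) x) :
    IsFixedPt μ ((ν ∘ μ)^[m] x) := by
  apply (hν.injective.comp hμ.injective).iterate m
  calc (ν ∘ μ)^[m] (μ ((ν ∘ μ)^[m] x))
      = μ x := iterate_apply_iterate (fun y => by simp only [comp_apply, hμ _, hν _]) m x
    _ = x := hx
    _ = (ν ∘ μ)^[m] ((ν ∘ μ)^[m] x) := by rw [← iterate_add_apply, ← two_mul, hm]

lemma isFixedPt_iterate_of_isPeriodicPt_two_mul_add_one (hμ : Involutive μ) (hν : Involutive ν)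
    (hx : IsFixedPt μ x) (hm : IsPeriodicPt (ν ∘ μ) (2 * m + 1) x) :
    IsFixedPt ν ((ν ∘ μ)^[m + 1] x) := by
  apply (hν.injective.comp hμ.injective).iterate (m + 1)
  calc (ν ∘ μ)^[m + 1] (ν ((ν ∘ μ)^[m + 1] x))
      = ν x := iterate_apply_iterate (fun y => by simp only [comp_apply, hμ _, hν _]) (m + 1) x
    _ = (ν ∘ μ) x := by rw [comp_apply, hx]
    _ = (ν ∘ μ) ((ν ∘ μ)^[2 * m + 1] x) := by rw [hm]
    _ = (ν ∘ μ)^[m + 1] ((ν ∘ μ)^[m + 1] x) := by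
      rw [← iterate_succ_apply' (ν ∘ μ), ← iterate_add_apply]
      congr 1
      omega

end Involutions

/-! ### Reduced quadratic irrationals -/

/-- A reduced quadratic irrational `α = (P + √D) / Q`, one with `1 < α` and `-1 < α̅ < 0`, whose
denominator divides `D - P ^ 2`; the quotient is recorded as `R`. Being reduced is expressed
by integer inequalities, with `⌊√D⌋` in place of `√D`, in a way symmetric in `Q` and `R`. -/
@[ext]
structure ReducedForm (D : ℕ) where
  P : ℤ
  Q : ℤ
  R : ℤ
  sq_add_mul : P ^ 2 + Q * R = D
  P_le_sqrt : P ≤ D.sqrt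
  sqrt_lt_P_add_Q : D.sqrt < P + Q
  sqrt_lt_P_add_R : D.sqrt < P + R

lemma sqrt_sq_lt_of_not_isSquare {D : ℕ} (hD : ¬IsSquare D) : (D.sqrt : ℤ) ^ 2 < D := by
  refine lt_of_le_of_ne (mod_cast D.sqrt_le') fun h => hD ⟨D.sqrt, ?_⟩
  rw [← sq]
  exact_mod_cast h.symm

namespace ReducedForm

variable {D : ℕ}

lemma Q_pos (x : ReducedForm D) : 0 < x.Q := by
  linarith [x.P_le_sqrt, x.sqrt_lt_P_add_Q]

lemma Q_le_P_add_sqrt (x : ReducedForm D) : x.Q ≤ x.P + D.sqrt := by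
  have hD : (D : ℤ) < (D.sqrt + 1) ^ 2 := mod_cast D.lt_succ_sqrt'
  have hR : D.sqrt + 1 - x.P ≤ x.R := by linarith [x.sqrt_lt_P_add_R]
  by_contra! h
  have h_mul : (x.P + D.sqrt + 1) * (D.sqrt + 1 - x.P) ≤ x.Q * x.R :=
    mul_le_mul h hR (by linarith [x.P_le_sqrt]) x.Q_pos.le
  linarith [x.sq_add_mul]

lemma P_pos (x : ReducedForm D) : 0 < x.P := by
  linarith [x.Q_le_P_add_sqrt, x.sqrt_lt_P_add_Q]

lemma Q_lt (x : ReducedForm D) : x.Q < D := by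
  nlinarith [x.sq_add_mul, x.P_pos, x.Q_pos, x.P_le_sqrt, x.sqrt_lt_P_add_R]

lemma eq_of_P_eq_of_Q_eq {x y : ReducedForm D} (hP : x.P = y.P) (hQ : x.Q = y.Q) : x = y := by
  refine ReducedForm.ext hP hQ (mul_left_cancel₀ x.Q_pos.ne' ?_)
  linear_combination x.sq_add_mul - y.sq_add_mul - (x.P + y.P) * hP - y.R * hQ

instance : Finite (ReducedForm D) := by
  have hP (x : ReducedForm D) : x.P ∈ Set.Icc 0 (D.sqrt : ℤ) := ⟨x.P_pos.le, x.P_le_sqrt⟩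
  have hQ (x : ReducedForm D) : x.Q ∈ Set.Icc 0 (D : ℤ) := ⟨x.Q_pos.le, x.Q_lt.le⟩
  refine .of_injective
    (fun x => ((⟨x.P, hP x⟩, ⟨x.Q, hQ x⟩) : Set.Icc 0 (D.sqrt : ℤ) × Set.Icc 0 (D : ℤ)))
    fun x y h => ?_
  simp only [Prod.mk.injEq, Subtype.mk.injEq] at h
  exact eq_of_P_eq_of_Q_eq h.1 h.2

/-- The integer part of `(P + √D) / Q`. -/
def floor (x : ReducedForm D) : ℤ :=
  (x.P + D.sqrt) / x.Q

lemma one_le_floor (x : ReducedForm D) : 1 ≤ x.floor := by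
  rw [floor, Int.le_ediv_iff_mul_le x.Q_pos, one_mul]
  exact x.Q_le_P_add_sqrt

lemma floor_mul_Q_le (x : ReducedForm D) : x.floor * x.Q ≤ x.P + D.sqrt :=
  Int.ediv_mul_le _ x.Q_pos.ne'

lemma lt_floor_add_one_mul_Q (x : ReducedForm D) : x.P + D.sqrt < (x.floor + 1) * x.Q :=
  Int.lt_ediv_add_one_mul_self _ x.Q_pos

/-- The involution `ν α = -1 / α̅`. -/
def negInvConj (x : ReducedForm D) : ReducedForm D where
  P := x.P
  Q := x.R
  R := x.Q
  sq_add_mul := by rw [mul_comm, x.sq_add_mul]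
  P_le_sqrt := x.P_le_sqrt
  sqrt_lt_P_add_Q := x.sqrt_lt_P_add_R
  sqrt_lt_P_add_R := x.sqrt_lt_P_add_Q

lemma negInvConj_involutive : Involutive (negInvConj (D := D)) :=
  fun _ => rfl

/-- The involution `μ α = ⌊α⌋ - α̅`. -/
def floorSubConj (hD : ¬IsSquare D) (x : ReducedForm D) : ReducedForm D where
  P := x.floor * x.Q - x.P
  Q := x.Q
  R := x.R + x.floor * (2 * x.P - x.floor * x.Q)
  sq_add_mul := by linear_combination x.sq_add_mul
  P_le_sqrt := by linarith [x.floor_mul_Q_le]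
  sqrt_lt_P_add_Q := by linarith [x.lt_floor_add_one_mul_Q]
  sqrt_lt_P_add_R := by
    have h_norm : (x.floor * x.Q - x.P) ^ 2
        + x.Q * (x.R + x.floor * (2 * x.P - x.floor * x.Q)) = D := by
      linear_combination x.sq_add_mul
    have h_Q : x.Q ≤ D.sqrt + (x.floor * x.Q - x.P) := by
      nlinarith [x.one_le_floor, x.Q_pos, x.P_le_sqrt]
    by_contra! h
    nlinarith [sqrt_sq_lt_of_not_isSquare hD, x.floor_mul_Q_le, x.Q_pos]

section

variable (hD : ¬IsSquare D)

lemma floor_floorSubConj (x : ReducedForm D) : (x.floorSubConj hD).floor = x.floor := by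
  have h_rem : (D.sqrt - x.P) / x.Q = 0 :=
    Int.ediv_eq_zero_of_lt (by linarith [x.P_le_sqrt]) (by linarith [x.sqrt_lt_P_add_Q])
  calc (x.floor * x.Q - x.P + D.sqrt) / x.Q = (D.sqrt - x.P + x.floor * x.Q) / x.Q := by ring_nf
    _ = x.floor := by rw [Int.add_mul_ediv_right _ _ x.Q_pos.ne', h_rem, zero_add]

lemma floorSubConj_involutive : Involutive (floorSubConj hD) := by
  intro x
  refine eq_of_P_eq_of_Q_eq ?_ rfl
  change (x.floorSubConj hD).floor * x.Q - (x.floor * x.Q - x.P) = x.P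
  rw [x.floor_floorSubConj hD]
  ring

/-- The continued fraction step `α ↦ 1 / (α - ⌊α⌋)`. -/
def next : ReducedForm D → ReducedForm D :=
  negInvConj ∘ floorSubConj hD

lemma next_injective : Injective (next hD) :=
  negInvConj_involutive.injective.comp (floorSubConj_involutive hD).injective

/-- The form `⌊√D⌋ + √D`. -/
def principal : ReducedForm D where
  P := D.sqrt
  Q := 1
  R := D - D.sqrt ^ 2
  sq_add_mul := by ring
  P_le_sqrt := le_rfl
  sqrt_lt_P_add_Q := by linarith
  sqrt_lt_P_add_R := by linarith [sqrt_sq_lt_of_not_isSquare hD]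

lemma floor_principal : (principal hD).floor = 2 * D.sqrt := by
  rw [floor, principal, Int.ediv_one, two_mul]

lemma isFixedPt_floorSubConj_principal : IsFixedPt (floorSubConj hD) (principal hD) := by
  refine eq_of_P_eq_of_Q_eq ?_ rfl
  change (principal hD).floor * 1 - D.sqrt = D.sqrt
  rw [floor_principal]
  ring

lemma eq_principal_of_Q_eq_one (x : ReducedForm D) (hQ : x.Q = 1) : x = principal hD := by
  have hP : x.P = D.sqrt :=
    le_antisymm x.P_le_sqrt (Int.lt_add_one_iff.mp (hQ ▸ x.sqrt_lt_P_add_Q))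
  exact eq_of_P_eq_of_Q_eq hP hQ

lemma Q_dvd_two_mul_P {x : ReducedForm D} (hx : IsFixedPt (floorSubConj hD) x) :
    x.Q ∣ 2 * x.P := by
  have hP : x.floor * x.Q - x.P = x.P := congrArg P hx
  exact ⟨x.floor, by linear_combination -hP⟩

lemma eq_sq_add_sq_of_isFixedPt {x : ReducedForm D} (hx : IsFixedPt negInvConj x) :
    (D : ℤ) = x.P ^ 2 + x.Q ^ 2 := by
  have hR : x.R = x.Q := congrArg Q hx
  rw [← x.sq_add_mul, hR, sq x.Q]

end

/-! ### The complete quotients of `√D` -/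

/-- The real number `(P + √D) / Q`. -/
noncomputable def value (x : ReducedForm D) : ℝ :=
  (x.P + √D) / x.Q

lemma floor_value (x : ReducedForm D) : ⌊x.value⌋ = x.floor := by
  rw [value, Int.floor_div_cast_of_nonneg x.Q_pos.le, Int.floor_intCast_add,
    Real.floor_real_sqrt_eq_nat_sqrt, floor]

lemma value_injective (hD : ¬IsSquare D) : Injective (value (D := D)) := by
  intro x y h
  have hx : (x.Q : ℝ) ≠ 0 := mod_cast x.Q_pos.ne'
  have hy : (y.Q : ℝ) ≠ 0 := mod_cast y.Q_pos.ne'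
  rw [value, value, div_eq_div_iff hx hy] at h
  have hQ : x.Q = y.Q := by
    by_contra hne
    apply ((irrational_sqrt_natCast_iff.mpr hD).intCast_mul (sub_ne_zero.mpr hne)).ne_int
      (x.P * y.Q - y.P * x.Q)
    push_cast
    linear_combination -h
  rw [hQ] at h
  have hP : x.P = y.P := by exact_mod_cast add_right_cancel (mul_right_cancel₀ hy h)
  exact eq_of_P_eq_of_Q_eq hP hQ

section

variable (hD : ¬IsSquare D)

lemma inv_fract_value (x : ReducedForm D) : (Int.fract x.value)⁻¹ = (x.next hD).value := by
  have hQ : (x.Q : ℝ) ≠ 0 := mod_cast x.Q_pos.ne'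
  have hQ' : ((x.next hD).Q : ℝ) ≠ 0 := mod_cast (x.next hD).Q_pos.ne'
  have hP' : ((x.next hD).P : ℝ) = x.floor * x.Q - x.P := by simp [next, negInvConj, floorSubConj]
  have h_norm : ((x.next hD).P : ℝ) ^ 2 + (x.next hD).Q * x.Q = √D ^ 2 := by
    rw [Real.sq_sqrt D.cast_nonneg]
    exact_mod_cast (x.next hD).sq_add_mul
  have h_fract : Int.fract x.value * x.Q = √D - (x.next hD).P := by
    rw [Int.fract, floor_value, value, sub_mul, div_mul_cancel₀ _ hQ, hP']
    ring
  apply inv_eq_of_mul_eq_one_right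
  apply mul_right_cancel₀ (mul_ne_zero hQ hQ')
  calc Int.fract x.value * (x.next hD).value * (x.Q * (x.next hD).Q)
      = (Int.fract x.value * x.Q) * (x.next hD).value * (x.next hD).Q := by ring
    _ = (√D - (x.next hD).P) * ((x.next hD).P + √D) := by
      rw [h_fract, value, mul_assoc, div_mul_cancel₀ _ hQ']
    _ = 1 * (x.Q * (x.next hD).Q) := by linear_combination -h_norm

lemma cfAlpha_sqrt_succ (k : ℕ) :
    cfAlpha √D (k + 1) = ((next hD)^[k + 1] (principal hD)).value := by
  induction k with
  | zero =>
    have h_value : (principal hD).value = D.sqrt + √D := by simp [value, principal]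
    rw [zero_add, iterate_one, ← inv_fract_value, h_value, Int.fract_natCast_add, cfAlpha_one]
  | succ k ih =>
    rw [← cfAlpha_cfAlpha √D (k + 1) 1, cfAlpha_one, ih, inv_fract_value,
      iterate_succ_apply' _ (k + 1)]

theorem cfPeriod_sqrt : cfPeriod √D = minimalPeriod (next hD) (principal hD) := by
  rw [minimalPeriod_eq_sInf, cfPeriod]
  congr 1 with l
  refine and_congr_right fun _ => ?_
  rw [forall_cfA_add_eq_iff, cfAlpha_sqrt_succ hD, cfAlpha_sqrt_succ hD 0,
    (value_injective hD).eq_iff, zero_add, iterate_one, iterate_succ_apply',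
    (next_injective hD).eq_iff]
  rfl

lemma minimalPeriod_next_principal_pos : 0 < minimalPeriod (next hD) (principal hD) :=
  minimalPeriod_pos_of_mem_periodicPts ((next_injective hD).mem_periodicPts _)

/-! ### Norms represented along the expansion -/

-- With `P' = ⌊α⌋ * Q - P` the next value of `P`, the divisibility says that `z * (P' + √D) / Q`
-- lies in `ℤ[√D]`; if `z = u + v√D` for a convergent `u / v`, this quotient is the next convergent.
lemma exists_norm_eq_next (x : ReducedForm D) {ε : ℤ} {z : ℤ√D} (h_norm : z.norm = ε * x.Q)
    (h_dvd : (x.Q : ℤ√D) ∣ z * ((Zsqrtd.sqrtd : ℤ√D) - x.P)) :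
    ∃ z' : ℤ√D, z'.norm = -ε * (x.next hD).Q ∧
      ((x.next hD).Q : ℤ√D) ∣ z' * ((Zsqrtd.sqrtd : ℤ√D) - (x.next hD).P) := by
  obtain ⟨w, hw⟩ := h_dvd
  have hP' : (x.next hD).P = x.floor * x.Q - x.P := rfl
  have h_disc : (x.next hD).P ^ 2 + (x.next hD).Q * x.Q = D := (x.next hD).sq_add_mul
  set P' := (x.next hD).P
  set Q' := (x.next hD).Q
  have hz' : x.Q * (x.floor * z + w) = z * ((Zsqrtd.sqrtd : ℤ√D) + P') := by
    rw [hP']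
    push_cast
    linear_combination -hw
  refine ⟨x.floor * z + w, ?_, z, ?_⟩
  · have h := congrArg Zsqrtd.norm hz'
    have h_factor : ((Zsqrtd.sqrtd : ℤ√D) + P').norm = -(Q' * x.Q) := by
      simp only [Zsqrtd.norm_def, Zsqrtd.re_add, Zsqrtd.im_add, Zsqrtd.re_sqrtd, Zsqrtd.im_sqrtd,
        Zsqrtd.re_intCast, Zsqrtd.im_intCast]
      linear_combination h_disc
    rw [Zsqrtd.norm_mul, Zsqrtd.norm_mul, Zsqrtd.norm_intCast, h_factor, h_norm] at h
    apply mul_left_cancel₀ (mul_ne_zero x.Q_pos.ne' x.Q_pos.ne')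
    linear_combination h
  · apply Zsqrtd.eq_of_smul_eq_smul_left x.Q_pos.ne'
    have h_disc' : (P' ^ 2 + Q' * x.Q : ℤ√D) = D := mod_cast h_disc
    have h_sqrtd : (Zsqrtd.sqrtd * Zsqrtd.sqrtd : ℤ√D) = D := Zsqrtd.dmuld
    linear_combination ((Zsqrtd.sqrtd : ℤ√D) - P') * hz' + z * h_sqrtd - z * h_disc'

lemma exists_norm_eq_iterate_next (k : ℕ) :
    ∃ z : ℤ√D, z.norm = (-1) ^ k * ((next hD)^[k] (principal hD)).Q := by
  suffices h : ∃ z : ℤ√D, z.norm = (-1) ^ k * ((next hD)^[k] (principal hD)).Q ∧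
      (((next hD)^[k] (principal hD)).Q : ℤ√D) ∣
        z * ((Zsqrtd.sqrtd : ℤ√D) - ((next hD)^[k] (principal hD)).P) from
    h.imp fun _ => And.left
  induction k with
  | zero => exact ⟨1, by simp [principal], by simp [principal]⟩
  | succ k ih =>
    obtain ⟨z, h_norm, h_dvd⟩ := ih
    rw [iterate_succ_apply', pow_succ, mul_neg_one]
    exact exists_norm_eq_next hD _ h_norm h_dvd

end

/-! ### Half way round the period -/

theorem eq_sq_add_sq_of_odd_cfPeriod (hD : ¬IsSquare D) (h : Odd (cfPeriod √D)) :
    ∃ a b : ℤ, (D : ℤ) = a ^ 2 + b ^ 2 := by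
  obtain ⟨m, hm⟩ := h
  rw [cfPeriod_sqrt hD] at hm
  have h_period := isPeriodicPt_minimalPeriod (next hD) (principal hD)
  rw [hm] at h_period
  exact ⟨_, _, eq_sq_add_sq_of_isFixedPt (isFixedPt_iterate_of_isPeriodicPt_two_mul_add_one
    (floorSubConj_involutive hD) negInvConj_involutive (isFixedPt_floorSubConj_principal hD)
    h_period)⟩

theorem exists_Q_dvd_two_mul_P_of_cfPeriod_eq_two_mul (hD : ¬IsSquare D) {m : ℕ}
    (hm : cfPeriod √D = 2 * m) :
    ∃ x : ReducedForm D, x.Q ≠ 1 ∧ x.Q ∣ 2 * x.P ∧ ∃ z : ℤ√D, z.norm = (-1) ^ m * x.Q := by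
  have h_pos := minimalPeriod_next_principal_pos hD
  rw [cfPeriod_sqrt hD] at hm
  have h_period := isPeriodicPt_minimalPeriod (next hD) (principal hD)
  rw [hm] at h_period
  refine ⟨(next hD)^[m] (principal hD), fun hQ => ?_, ?_, exists_norm_eq_iterate_next hD m⟩
  · exact not_isPeriodicPt_of_pos_of_lt_minimalPeriod (by omega) (by omega)
      (eq_principal_of_Q_eq_one hD _ hQ)
  · exact Q_dvd_two_mul_P hD (isFixedPt_iterate_of_isPeriodicPt_two_mul
      (floorSubConj_involutive hD) negInvConj_involutive (isFixedPt_floorSubConj_principal hD)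
      h_period)

lemma Q_eq_two_of_dvd_two_mul_P {p : ℕ} (hp : p.Prime) (x : ReducedForm p) (h_one : x.Q ≠ 1)
    (h_dvd : x.Q ∣ 2 * x.P) : x.Q = 2 := by
  have hp' : Prime (p : ℤ) := Nat.prime_iff_prime_int.mp hp
  have h_four_mul : x.Q ∣ 4 * p := by
    have h_eq : (4 * p : ℤ) = 2 * x.P * (2 * x.P) + x.Q * (4 * x.R) := by
      linear_combination -4 * x.sq_add_mul
    exact h_eq ▸ dvd_add (h_dvd.mul_right _) (dvd_mul_right _ _)
  have h_coprime : IsCoprime x.Q p :=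
    (hp'.coprime_iff_not_dvd.mpr fun h => (Int.le_of_dvd x.Q_pos h).not_gt x.Q_lt).symm
  have h_four : x.Q ∣ 4 := h_coprime.dvd_of_dvd_mul_right h_four_mul
  have h_ne_four : x.Q ≠ 4 := by
    intro hQ
    rw [hQ] at h_dvd
    obtain ⟨c, hc⟩ : (2 : ℤ) ∣ x.P := by omega
    have h_sq_dvd : (2 * 2 : ℤ) ∣ p := ⟨c ^ 2 + x.R, by rw [← x.sq_add_mul, hc, hQ]; ring⟩
    exact absurd (hp'.irreducible.squarefree 2 h_sq_dvd) (by decide)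
  have h_le : x.Q ≤ 4 := Int.le_of_dvd (by norm_num) h_four
  have h_pos := x.Q_pos
  have h_ne_three : x.Q ≠ 3 := fun hQ => absurd (hQ ▸ h_four) (by decide)
  omega

end ReducedForm

/-! ### Congruences -/

lemma emod_four_ne_three_of_eq_sq_add_sq {n a b : ℤ} (h : n = a ^ 2 + b ^ 2) : n % 4 ≠ 3 := by
  intro hn
  have h_mod : ∀ a b : ZMod 4, a ^ 2 + b ^ 2 ≠ 3 := by decide
  apply h_mod a b
  have h_cast : ((n : ℤ) : ZMod 4) = (3 : ℤ) := (ZMod.intCast_eq_intCast_iff' n 3 4).mpr hn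
  rw [h] at h_cast
  exact_mod_cast h_cast

lemma emod_eight_eq_of_sq_sub_mul_sq_eq {d u v ε : ℤ} (hd : Odd d) (hε : Odd ε)
    (h : u ^ 2 - d * v ^ 2 = 2 * ε) : d % 8 = (1 - 2 * ε) % 8 := by
  have h_mod : ∀ d u v ε : ZMod 8, 4 * d = 4 → 4 * ε = 4 → u ^ 2 - d * v ^ 2 = 2 * ε →
      d = 1 - 2 * ε := by decide
  have h_four {n : ℤ} (hn : Odd n) : (4 * n : ZMod 8) = 4 := by
    exact_mod_cast (ZMod.intCast_eq_intCast_iff' (4 * n) 4 8).mpr (by grind)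
  apply (ZMod.intCast_eq_intCast_iff' d (1 - 2 * ε) 8).mp
  push_cast
  exact h_mod d u v ε (h_four hd) (h_four hε) (mod_cast congrArg (Int.cast : ℤ → ZMod 8) h)

theorem mod_eight_of_cfPeriod_eq_two_mul {p m : ℕ} (hp : p.Prime) (hm : cfPeriod √p = 2 * m) :
    (Odd m ∧ p % 8 = 3) ∨ (Even m ∧ p % 8 = 7) := by
  have hD : ¬IsSquare p := hp.prime.not_isSquare
  obtain ⟨x, h_one, h_dvd, z, hz⟩ := ReducedForm.exists_Q_dvd_two_mul_P_of_cfPeriod_eq_two_mul hD hm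
  have hQ := x.Q_eq_two_of_dvd_two_mul_P hp h_one h_dvd
  have hp_odd : Odd (p : ℤ) := mod_cast hp.odd_of_ne_two (by have := x.Q_lt; omega)
  rw [Zsqrtd.norm_def, hQ, mul_comm _ 2, ← sq, mul_assoc, ← sq] at hz
  have h_mod := emod_eight_eq_of_sq_sub_mul_sq_eq hp_odd odd_neg_one.pow hz
  rcases Nat.even_or_odd m with h_even | h_odd
  · rw [h_even.neg_one_pow] at h_mod
    exact .inr ⟨h_even, by omega⟩
  · rw [h_odd.neg_one_pow] at h_mod
    exact .inl ⟨h_odd, by omega⟩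

theorem stmt_9 (p : ℕ) (hp : p.Prime) :
    (Even (cfPeriod (Real.sqrt p)) ↔ p % 4 = 3) ∧
      (4 ∣ cfPeriod (Real.sqrt p) ↔ p % 8 = 7) := by
  rcases Nat.even_or_odd' (cfPeriod √p) with ⟨m, h_period | h_period⟩
  · have h_mod := mod_eight_of_cfPeriod_eq_two_mul hp h_period
    rw [Nat.odd_iff, Nat.even_iff] at h_mod
    rw [Nat.even_iff]
    omega
  · have h_mod : p % 4 ≠ 3 := by
      obtain ⟨a, b, h⟩ := ReducedForm.eq_sq_add_sq_of_odd_cfPeriod hp.prime.not_isSquare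
        ⟨m, h_period⟩
      exact mod_cast emod_four_ne_three_of_eq_sq_add_sq h
    rw [Nat.even_iff]
    omega
end

section
/- Let m be a positive integer and let a₁, …, a_{2m−1} be positive integers. If q_{2m−2}(a₂, …, a_{2m−1}) = 2·q_{2m−2}(a₁, …, a_{2m−2}), then a_j = 1 for some j ∈ {1, …, 2m−1}. -/
/-- Shifted continuant polynomials: `contq x (n+1) = qₙ(x 1, …, x n)`, where
`q₋₁ = 0`, `q₀ = 1`, and `qₙ = xₙ·q_{n−1} + q_{n−2}`.  Thus `contq x 0 = q₋₁ = 0`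
and `contq x 1 = q₀ = 1`. -/
def contq (x : ℕ → ℤ) : ℕ → ℤ
  | 0 => 0
  | 1 => 1
  | n + 2 => x (n + 1) * contq x (n + 1) + contq x n

/-!
By reversal symmetry the hypothesis says `[aₙ; …, a₁] = c · [a₁; …, aₙ]`, with `n` odd and `c = 2`.
Formally, `c · [y₁; y₂, y₃, …] = [c y₁; y₂ / c, c y₃, …]`. If all partial quotients are at least
`c`, the fractional parts are too small to interfere, so the expansions agree term by term:
multiplication by `c` passes to the complete quotients with the roles of the two sides exchanged.
As `n` is odd, the first and the last comparison have the same direction and give `aₙ = c · a₁` and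
`a₁ = c · aₙ`, which is absurd for `c > 1`.
-/

theorem contq_add_two (x : ℕ → ℤ) (n : ℕ) :
    contq x (n + 2) = x (n + 1) * contq x (n + 1) + contq x n :=
  rfl

theorem contq_add_two_left (x : ℕ → ℤ) (n : ℕ) :
    contq x (n + 2) =
      x 1 * contq (fun i ↦ x (i + 1)) (n + 1) + contq (fun i ↦ x (i + 2)) n := by
  induction n using Nat.twoStepInduction with
  | zero => simp [contq]
  | one => simp [contq, mul_comm]
  | more n ih₀ ih₁ =>
    rw [contq_add_two x, ih₀, ih₁, contq_add_two (fun i ↦ x (i + 1)) (n + 1),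
      contq_add_two (fun i ↦ x (i + 2)) n]
    ring

theorem contq_reflect (x : ℕ → ℤ) (k n : ℕ) :
    contq (fun i ↦ x (n + k - i)) n = contq (fun i ↦ x (i + k)) n := by
  induction n using Nat.twoStepInduction with
  | zero => rfl
  | one => rfl
  | more n ih₀ ih₁ =>
    have shift_one : (fun i ↦ x (n + 2 + k - (i + 1))) = fun i ↦ x (n + 1 + k - i) := by grind
    have shift_two : (fun i ↦ x (n + 2 + k - (i + 2))) = fun i ↦ x (n + k - i) := by grind
    have first_index : n + 2 + k - 1 = n + 1 + k := by lia
    rw [contq_add_two_left, shift_one, shift_two, first_index, ih₀, ih₁, contq_add_two]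

theorem contq_succ_pos {x : ℕ → ℤ} {n : ℕ} (hx : ∀ i ∈ Set.Icc 1 n, 0 < x i) :
    0 < contq x (n + 1) := by
  induction n using Nat.twoStepInduction with
  | zero => simp [contq]
  | one => simpa [contq] using hx
  | more n ih₀ ih₁ =>
    have h₀ := ih₀ fun i hi ↦ hx i (Set.Icc_subset_Icc_right (by lia) hi)
    have h₁ := ih₁ fun i hi ↦ hx i (Set.Icc_subset_Icc_right (by lia) hi)
    have hlast := hx (n + 2) (by simp)
    rw [contq_add_two]
    positivity

theorem mul_contq_succ_le {c : ℤ} (hc : 0 < c) {x : ℕ → ℤ} {n : ℕ}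
    (hx : ∀ i ∈ Set.Icc 1 (n + 1), c ≤ x i) :
    c * contq x (n + 1) ≤ contq x (n + 2) := by
  have hpos : ∀ i ∈ Set.Icc 1 (n + 1), 0 < x i := fun i hi ↦ hc.trans_le (hx i hi)
  have hsucc : 0 < contq x (n + 1) :=
    contq_succ_pos fun i hi ↦ hpos i (Set.Icc_subset_Icc_right (by lia) hi)
  have hnonneg : 0 ≤ contq x n := by
    cases n with
    | zero => rfl
    | succ n =>
      exact (contq_succ_pos fun i hi ↦ hpos i (Set.Icc_subset_Icc_right (by lia) hi)).le
  calc c * contq x (n + 1) ≤ x (n + 1) * contq x (n + 1) := by gcongr; exact hx _ (by simp)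
    _ ≤ contq x (n + 2) := le_add_of_nonneg_right hnonneg

/-- The equality `[x n; x (n-1), …, x 1] = c * [y n; y (n-1), …, y 1]` of finite continued
fractions, with denominators cleared. This makes it an identity in `ℤ`, trivially true for
`n = 0`. -/
def IsContFracMultiple (c : ℤ) (x y : ℕ → ℤ) (n : ℕ) : Prop :=
  contq x (n + 1) * contq y n = c * (contq y (n + 1) * contq x n)

theorem isContFracMultiple_reflect {c : ℤ} {a : ℕ → ℤ} {n : ℕ}
    (h : contq (fun i ↦ a (i + 1)) n = c * contq a n) :
    IsContFracMultiple c a (fun i ↦ a (n + 1 - i)) n := by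
  rw [IsContFracMultiple, contq_reflect a 1, h, contq_reflect a 0 (n + 1)]
  simp only [add_zero]
  ring

-- The hypotheses bound `P' / P` and `c * Q' / Q` so that these differ by less than `1`.
theorem eq_mul_and_cross_eq_of_cross_eq {c s t P P' Q Q' : ℤ} (hc : 0 ≤ c)
    (hP' : 0 < P') (hPP' : P' < P) (hQ' : 0 ≤ Q') (hQ : 0 < Q) (hQQ' : c * Q' ≤ Q)
    (h : (s * P + P') * Q = c * ((t * Q + Q') * P)) :
    s = c * t ∧ Q * P' = c * (P * Q') := by
  have hP : 0 < P := hP'.trans hPP'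
  have hdiff : (s - c * t) * (P * Q) = c * Q' * P - P' * Q := by linear_combination h
  have hlt : s - c * t < 1 := by
    refine lt_of_mul_lt_mul_right (a := P * Q) ?_ (by positivity)
    calc (s - c * t) * (P * Q) < c * Q' * P := by rw [hdiff]; exact sub_lt_self _ (by positivity)
      _ ≤ Q * P := by gcongr
      _ = 1 * (P * Q) := by ring
  have hgt : -1 < s - c * t := by
    refine lt_of_mul_lt_mul_right (a := P * Q) ?_ (by positivity)
    calc -1 * (P * Q) = -(P * Q) := by ring
      _ < -(P' * Q) := by gcongr
      _ ≤ c * Q' * P - P' * Q := by linarith [show 0 ≤ c * Q' * P by positivity]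
      _ = (s - c * t) * (P * Q) := hdiff.symm
  have hst : s = c * t := by lia
  exact ⟨hst, by subst hst; linear_combination h⟩

namespace IsContFracMultiple

variable {c : ℤ} {x y : ℕ → ℤ}

theorem last_eq_and_swap (hc : 1 < c) {n : ℕ} (hx : ∀ i ∈ Set.Icc 1 n, c ≤ x i)
    (hy : ∀ i ∈ Set.Icc 1 n, c ≤ y i) (h : IsContFracMultiple c x y (n + 1)) :
    x (n + 1) = c * y (n + 1) ∧ IsContFracMultiple c y x n := by
  cases n with
  | zero => simpa [IsContFracMultiple, contq] using h
  | succ n =>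
    have hc₀ : 0 < c := by lia
    have contq_pos {z : ℕ → ℤ} (hz : ∀ i ∈ Set.Icc 1 (n + 1), c ≤ z i) : 0 < contq z (n + 1) :=
      contq_succ_pos fun i hi ↦ hc₀.trans_le (hz i (Set.Icc_subset_Icc_right (by lia) hi))
    have hxpos := contq_pos hx
    have hypos := contq_pos hy
    have hxlt : contq x (n + 1) < contq x (n + 2) :=
      (lt_mul_of_one_lt_left hxpos hc).trans_le (mul_contq_succ_le hc₀ hx)
    have hyle : c * contq y (n + 1) ≤ contq y (n + 2) := mul_contq_succ_le hc₀ hy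
    have hypos' : 0 < contq y (n + 2) := (mul_pos hc₀ hypos).trans_le hyle
    exact eq_mul_and_cross_eq_of_cross_eq hc₀.le hxpos hxlt hypos.le hypos' hyle h

theorem first_eq (hc : 1 < c) {k : ℕ} (hx : ∀ i ∈ Set.Icc 1 (2 * k), c ≤ x i)
    (hy : ∀ i ∈ Set.Icc 1 (2 * k), c ≤ y i) (h : IsContFracMultiple c x y (2 * k + 1)) :
    x 1 = c * y 1 := by
  induction k with
  | zero => exact (h.last_eq_and_swap hc hx hy).1
  | succ k ih =>
    have restrict {z : ℕ → ℤ} (hz : ∀ i ∈ Set.Icc 1 (2 * (k + 1)), c ≤ z i) {l : ℕ}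
        (hl : l ≤ 2 * (k + 1)) : ∀ i ∈ Set.Icc 1 l, c ≤ z i :=
      fun i hi ↦ hz i (Set.Icc_subset_Icc_right hl hi)
    have hswap : IsContFracMultiple c y x (2 * k + 2) := (h.last_eq_and_swap hc hx hy).2
    have hpeeled : IsContFracMultiple c x y (2 * k + 1) :=
      (hswap.last_eq_and_swap hc (restrict hy (by lia)) (restrict hx (by lia))).2
    exact ih (restrict hx (by lia)) (restrict hy (by lia)) hpeeled

end IsContFracMultiple

theorem stmt_13_general {c : ℤ} (hc : 1 < c) {n : ℕ} (hn : Odd n) (a : ℕ → ℤ)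
    (h : contq (fun i ↦ a (i + 1)) n = c * contq a n) :
    ∃ j : ℕ, 1 ≤ j ∧ j ≤ n ∧ a j < c := by
  by_contra! hge
  obtain ⟨k, rfl⟩ := hn
  have ha : ∀ i ∈ Set.Icc 1 (2 * k), c ≤ a i := fun i hi ↦ hge i hi.1 (by grind)
  have hrev : ∀ i ∈ Set.Icc 1 (2 * k), c ≤ a (2 * k + 1 + 1 - i) :=
    fun i hi ↦ hge _ (by grind) (by grind)
  have hmul := isContFracMultiple_reflect h
  have hfirst : a 1 = c * a (2 * k + 1) := hmul.first_eq hc ha hrev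
  have hlast : a (2 * k + 1) = c * a 1 := by
    simpa using (hmul.last_eq_and_swap hc ha hrev).1
  have digit_lt_mul {j : ℕ} (hj₁ : 1 ≤ j) (hj₂ : j ≤ 2 * k + 1) : a j < c * a j :=
    lt_mul_of_one_lt_left (by linarith [hge j hj₁ hj₂]) hc
  exact lt_irrefl (a 1) <| calc
    a 1 < c * a 1 := digit_lt_mul le_rfl (by lia)
    _ = a (2 * k + 1) := hlast.symm
    _ < c * a (2 * k + 1) := digit_lt_mul (by lia) le_rfl
    _ = a 1 := hfirst.symm

theorem stmt_13 (m : ℕ) (hm : 0 < m) (a : ℕ → ℤ)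
    (ha : ∀ i : ℕ, 1 ≤ i → i ≤ 2 * m - 1 → 0 < a i)
    (h : contq (fun i => a (i + 1)) (2 * m - 1) = 2 * contq a (2 * m - 1)) :
    ∃ j : ℕ, 1 ≤ j ∧ j ≤ 2 * m - 1 ∧ a j = 1 := by
  obtain ⟨j, hj₁, hj₂, hlt⟩ := stmt_13_general one_lt_two ⟨m - 1, by lia⟩ a h
  exact ⟨j, hj₁, hj₂, by linarith [ha j hj₁ hj₂]⟩
end

section
/- There exists a constant C > 0 such that for every squarefree integer D > 1, the period length T_D of the continued fraction expansion of √D satisfies T_D ≤ C·√D·log D. -/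
/-! A quadratic surd `α = (P + √D) / Q` is reduced when `1 < α` and its conjugate `ᾱ` lies in
`(-1, 0)`. Both `α ↦ ⌊α⌋ - ᾱ` and `α ↦ -1 / ᾱ` are involutions of the finite set of reduced surds
of radicand `D`, and their composite is the continued fraction step `α ↦ 1 / (α - ⌊α⌋)`. The step
is therefore a permutation; since `√D` has the same fractional part as the reduced surd
`√D + ⌊√D⌋`, the period of `√D` is at most the number of reduced surds.

A reduced surd has `Q < 2√D`, and `P` lies in an interval of length `Q` and solves
`P ^ 2 ≡ D [ZMOD Q]`. For squarefree `D` this congruence has at most `2 σ₀(Q)` solutions: if `z` is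
one of them, then any two solutions `x`, `y` with `gcd (x - z) Q = gcd (y - z) Q` satisfy
`2 * x ≡ 2 * y [ZMOD Q]`. Summing `σ₀(Q)` over `Q < 2√D` gives `O(√D log D)`. -/

lemma cfPeriod_le_natCard {α : Type*} [Finite α] {f : α → α} (hf : Function.Injective f)
    {v : α → ℝ} {a : α} {x : ℝ} (h : ∀ k, cfAlpha x (k + 1) = v (f^[k + 1] a)) :
    cfPeriod x ≤ Nat.card α := by
  have := Fintype.ofFinite α
  have hperiodic : f^[Function.minimalPeriod f a] a = a := Function.iterate_minimalPeriod
  calc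
    cfPeriod x ≤ Function.minimalPeriod f a := by
      refine Nat.sInf_le
        ⟨Function.minimalPeriod_pos_of_mem_periodicPts (hf.mem_periodicPts a), fun k hk ↦ ?_⟩
      obtain ⟨k, rfl⟩ := Nat.exists_eq_add_of_le' hk
      rw [cfA, cfA, add_right_comm, h, h, add_right_comm, Function.iterate_add_apply, hperiodic]
    _ ≤ Nat.card α := Nat.card_eq_fintype_card (α := α) ▸ Function.minimalPeriod_le_card

lemma dvd_of_sq_dvd_sq_mul_of_squarefree {R : Type*} [CommMonoidWithZero R] [GCDMonoid R]
    {a m D : R} (hD : Squarefree D) (h : a ^ 2 ∣ m ^ 2 * D) : a ∣ m := by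
  rcases eq_or_ne m 0 with rfl | hm
  · exact dvd_zero a
  have hg : gcd a m ≠ 0 := fun h0 ↦ hm ((gcd_eq_zero_iff a m).1 h0).2
  obtain ⟨a', m', ha, hm', hrel⟩ := extract_gcd a m
  have hsq : a' ^ 2 ∣ m' ^ 2 * D := by
    refine (mul_dvd_mul_iff_left (pow_ne_zero 2 hg)).1 ?_
    rwa [← mul_assoc, ← mul_pow, ← mul_pow, ← ha, ← hm']
  have ha' : IsUnit a' :=
    hD a' (sq a' ▸ (gcd_isUnit_iff_isRelPrime.1 hrel).pow.dvd_of_dvd_mul_left hsq)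
  rw [ha, ha'.mul_right_dvd]
  exact gcd_dvd_right a m

lemma dvd_of_sq_dvd_sub_sq_of_squarefree {R : Type*} [CommRing R] [GCDMonoid R] {D g m z : R}
    (hD : Squarefree D) (hz : g ∣ m * z) (h : g ^ 2 ∣ D - z ^ 2) : g ∣ m := by
  refine dvd_of_sq_dvd_sq_mul_of_squarefree hD ?_
  have hsum : g ^ 2 ∣ m ^ 2 * (D - z ^ 2) + (m * z) ^ 2 :=
    dvd_add (h.mul_left _) (pow_dvd_pow_of_dvd hz 2)
  rwa [show m ^ 2 * (D - z ^ 2) + (m * z) ^ 2 = m ^ 2 * D by ring] at hsum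

lemma mul_dvd_two_mul_sub {D d e x y z : ℤ} (hD : Squarefree D) (hz : d * e ∣ D - z ^ 2)
    (hdx : d ∣ x - z) (hdy : d ∣ y - z) (hex : e ∣ x + z) (hey : e ∣ y + z) :
    d * e ∣ 2 * (x - y) := by
  have hgcd_left : (Int.gcd d e : ℤ) ∣ d := Int.gcd_dvd_left d e
  have hgcd_right : (Int.gcd d e : ℤ) ∣ e := Int.gcd_dvd_right d e
  have hgcd : (Int.gcd d e : ℤ) ∣ 2 := by
    refine dvd_of_sq_dvd_sub_sq_of_squarefree hD (z := z) ?_ ?_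
    · rw [show 2 * z = (x + z) - (x - z) by ring]
      exact dvd_sub (hgcd_right.trans hex) (hgcd_left.trans hdx)
    · rw [sq]
      exact (mul_dvd_mul hgcd_left hgcd_right).trans hz
  have hlcm : (Int.lcm d e : ℤ) ∣ x - y := by
    refine Int.coe_lcm_dvd ?_ ?_
    · simpa using dvd_sub hdx hdy
    · simpa using dvd_sub hex hey
  have hmul : d * e ∣ (Int.gcd d e : ℤ) * Int.lcm d e := by
    rw [← Nat.cast_mul, Int.gcd_mul_lcm, ← Int.natAbs_mul, Int.dvd_natAbs]
  exact hmul.trans (mul_dvd_mul hgcd hlcm)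

lemma dvd_two_mul_sub_of_gcd_sub_eq {D Q x y z : ℤ} (hD : Squarefree D)
    (hx : Q ∣ D - x ^ 2) (hy : Q ∣ D - y ^ 2) (hz : Q ∣ D - z ^ 2)
    (hgcd : Int.gcd (x - z) Q = Int.gcd (y - z) Q) : Q ∣ 2 * (x - y) := by
  obtain ⟨d, hd⟩ : ∃ d : ℤ, d = Int.gcd (x - z) Q := ⟨_, rfl⟩
  have hd' : d = Int.gcd (y - z) Q := hd.trans (congrArg _ hgcd)
  have hdx : d ∣ x - z := hd ▸ Int.gcd_dvd_left _ _
  have hdy : d ∣ y - z := hd' ▸ Int.gcd_dvd_left _ _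
  rcases eq_or_ne d 0 with rfl | hd0
  · rw [zero_dvd_iff, sub_eq_zero] at hdx hdy
    simp [hdx, hdy]
  obtain ⟨e, rfl⟩ : d ∣ Q := hd ▸ Int.gcd_dvd_right _ _
  have dvd_add_of_gcd {w : ℤ} (hw : d * e ∣ D - w ^ 2) (hdw : d = Int.gcd (w - z) (d * e)) :
      e ∣ w + z := by
    have hprod : d * e ∣ (w - z) * (w + z) := by
      rw [show (w - z) * (w + z) = (D - z ^ 2) - (D - w ^ 2) by ring]
      exact dvd_sub hz hw
    rw [← Int.dvd_gcd_mul_iff_dvd_mul, Int.gcd_comm, ← hdw] at hprod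
    exact (mul_dvd_mul_iff_left hd0).1 hprod
  exact mul_dvd_two_mul_sub hD hz hdx hdy (dvd_add_of_gcd hx hd) (dvd_add_of_gcd hy hd')

lemma card_le_two_of_dvd_two_mul_sub {S : Finset ℤ} {a Q : ℤ} (hS : S ⊆ Finset.Ioc (a - Q) a)
    (h : ∀ x ∈ S, ∀ y ∈ S, Q ∣ 2 * (x - y)) : S.card ≤ 2 := by
  by_contra! hcard
  obtain ⟨u, hu, v, hv, w, hw, huv, huw, hvw⟩ := Finset.two_lt_card.1 hcard
  obtain ⟨c, hc⟩ := h u hu v hv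
  obtain ⟨c', hc'⟩ := h u hu w hw
  have hu' := Finset.mem_Ioc.1 (hS hu)
  have hv' := Finset.mem_Ioc.1 (hS hv)
  have hw' := Finset.mem_Ioc.1 (hS hw)
  obtain ⟨hc_gt, hc_lt⟩ : -2 < c ∧ c < 2 := ⟨by nlinarith, by nlinarith⟩
  obtain ⟨hc'_gt, hc'_lt⟩ : -2 < c' ∧ c' < 2 := ⟨by nlinarith, by nlinarith⟩
  -- Both `c` and `c'` are `±1`: `c = c'` gives `v = w`, and `c = -c'` gives `v - w = ±Q`.
  interval_cases c <;> interval_cases c' <;> omega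

lemma card_filter_dvd_sub_sq_le {D : ℤ} (hD : Squarefree D) (Q : ℕ) (a : ℤ) :
    {P ∈ Finset.Ioc (a - Q) a | (Q : ℤ) ∣ D - P ^ 2}.card ≤ 2 * Q.divisors.card := by
  rcases Q.eq_zero_or_pos with rfl | hQ
  · simp
  set S := {P ∈ Finset.Ioc (a - Q) a | (Q : ℤ) ∣ D - P ^ 2}
  rcases S.eq_empty_or_nonempty with hempty | ⟨z, hz⟩
  · simp [hempty]
  refine Finset.card_le_mul_card_image_of_maps_to (f := fun x ↦ Int.gcd (x - z) Q)
    (fun x _ ↦ ?_) 2 fun d _ ↦ ?_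
  · exact Nat.mem_divisors.2 ⟨Int.natCast_dvd_natCast.1 (Int.gcd_dvd_right _ _), hQ.ne'⟩
  · refine card_le_two_of_dvd_two_mul_sub (a := a) (Q := Q)
      ((Finset.filter_subset _ _).trans (Finset.filter_subset _ _)) fun x hx y hy ↦ ?_
    obtain ⟨hxS, hxd⟩ := Finset.mem_filter.1 hx
    obtain ⟨hyS, hyd⟩ := Finset.mem_filter.1 hy
    exact dvd_two_mul_sub_of_gcd_sub_eq hD (Finset.mem_filter.1 hxS).2
      (Finset.mem_filter.1 hyS).2 (Finset.mem_filter.1 hz).2 (hxd.trans hyd.symm)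

lemma sum_card_divisors_le {x : ℝ} (hx : 1 ≤ x) :
    ∑ n ∈ Finset.Ioc 0 ⌊x⌋₊, (n.divisors.card : ℝ) ≤ x * (1 + Real.log x) := by
  have hN : (⌊x⌋₊ : ℝ) ≤ x := Nat.floor_le (by linarith)
  have hharmonic := harmonic_floor_le_one_add_log x hx
  set N := ⌊x⌋₊
  have hsum : ∑ n ∈ Finset.Ioc 0 N, n.divisors.card = ∑ n ∈ Finset.Ioc 0 N, N / n := by
    simpa only [ArithmeticFunction.sigma_zero_apply] using
      ArithmeticFunction.sum_Ioc_sigma0_eq_sum_div N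
  calc
    ∑ n ∈ Finset.Ioc 0 N, (n.divisors.card : ℝ) = ∑ n ∈ Finset.Ioc 0 N, ((N / n : ℕ) : ℝ) := by
      exact_mod_cast hsum
    _ ≤ ∑ n ∈ Finset.Ioc 0 N, (N : ℝ) * (n : ℝ)⁻¹ :=
      Finset.sum_le_sum fun n _ ↦ Nat.cast_div_le.trans_eq (div_eq_mul_inv _ _)
    _ = N * (harmonic N : ℝ) := by
      rw [← Finset.mul_sum, harmonic_eq_sum_Icc]
      push_cast
      rfl
    _ ≤ N * (1 + Real.log x) := by gcongr
    _ ≤ x * (1 + Real.log x) := by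
      gcongr
      linarith [Real.log_nonneg hx]

lemma one_add_log_two_mul_sqrt_le {x : ℝ} (hx : 2 ≤ x) :
    1 + Real.log (2 * √x) ≤ 3 * Real.log x := by
  have hx0 : 0 < x := by linarith
  have hlog : Real.log 2 ≤ Real.log x := Real.log_le_log two_pos hx
  rw [Real.log_mul two_ne_zero (Real.sqrt_ne_zero'.2 hx0), Real.log_sqrt hx0.le]
  linarith [Real.log_two_gt_d9]

lemma irrational_sqrt_of_squarefree {D : ℕ} (hD : Squarefree D) (hD1 : D ≠ 1) :
    Irrational √(D : ℝ) := by
  rw [irrational_sqrt_natCast_iff]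
  rintro ⟨m, rfl⟩
  exact hD1 (by simp [Nat.isUnit_iff.1 (hD m dvd_rfl)])

/-- A reduced quadratic surd `α = (P + √D) / Q`. The inequalities `1 < α` and `-1 < ᾱ < 0` are
stated with the denominator cleared, which is legitimate because the last two force `0 < Q`. -/
@[ext]
structure ReducedSurd (D : ℕ) where
  P : ℤ
  Q : ℤ
  dvd : Q ∣ D - P ^ 2
  lt_sqrt_add : (Q : ℝ) < √(D : ℝ) + P
  lt_sqrt : (P : ℝ) < √(D : ℝ)
  sqrt_sub_lt : √(D : ℝ) - P < Q

namespace ReducedSurd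

variable {D : ℕ}

section Involutions

variable (hD : Irrational √(D : ℝ)) (s : ReducedSurd D)

/-- The real number `(P + √D) / Q` represented by a reduced surd. -/
noncomputable def val : ℝ := (s.P + √(D : ℝ)) / s.Q

lemma Q_cast_pos : (0 : ℝ) < s.Q := by
  linarith [s.lt_sqrt, s.sqrt_sub_lt]

lemma Q_pos : 0 < s.Q := by
  exact_mod_cast s.Q_cast_pos

lemma sqrt_sub_pos : 0 < √(D : ℝ) - s.P := sub_pos.2 s.lt_sqrt

lemma sqrt_add_pos : 0 < √(D : ℝ) + s.P := s.Q_cast_pos.trans s.lt_sqrt_add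

lemma sqrt_sub_mul_sqrt_add :
    (√(D : ℝ) - s.P) * (√(D : ℝ) + s.P) = s.Q * ((D - s.P ^ 2) / s.Q : ℤ) := by
  have h : s.Q * ((D - s.P ^ 2) / s.Q) = D - s.P ^ 2 := Int.mul_ediv_cancel' s.dvd
  have h' : (s.Q : ℝ) * ((D - s.P ^ 2) / s.Q : ℤ) = D - s.P ^ 2 := by exact_mod_cast h
  linear_combination Real.sq_sqrt (Nat.cast_nonneg' D) - h'

/-- The involution `α ↦ -1 / ᾱ` of the reduced surds. -/
def negInvConj : ReducedSurd D where
  P := s.P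
  Q := (D - s.P ^ 2) / s.Q
  dvd := Int.ediv_dvd_of_dvd s.dvd
  lt_sqrt_add := by
    nlinarith [s.sqrt_sub_mul_sqrt_add, s.sqrt_sub_lt, s.sqrt_add_pos, s.Q_cast_pos]
  lt_sqrt := s.lt_sqrt
  sqrt_sub_lt := by
    nlinarith [s.sqrt_sub_mul_sqrt_add, s.lt_sqrt_add, s.sqrt_sub_pos, s.Q_cast_pos]

lemma negInvConj_involutive : Function.Involutive (negInvConj (D := D)) := fun s ↦
  ReducedSurd.ext rfl <|
    Int.ediv_eq_of_eq_mul_right s.negInvConj.Q_pos.ne' (Int.ediv_mul_cancel s.dvd).symm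

lemma val_negInvConj : s.negInvConj.val = s.Q / (√(D : ℝ) - s.P) := by
  rw [val, div_eq_div_iff s.negInvConj.Q_cast_pos.ne' s.sqrt_sub_pos.ne']
  simp only [negInvConj]
  linear_combination s.sqrt_sub_mul_sqrt_add

lemma floor_mul_le : (⌊s.val⌋ : ℝ) * s.Q ≤ s.P + √(D : ℝ) :=
  (le_div_iff₀ s.Q_cast_pos).1 (Int.floor_le s.val)

lemma lt_floor_add_one_mul : s.P + √(D : ℝ) < (⌊s.val⌋ + 1 : ℝ) * s.Q :=
  (div_lt_iff₀ s.Q_cast_pos).1 (Int.lt_floor_add_one s.val)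

lemma one_le_floor_val : 1 ≤ ⌊s.val⌋ := by
  rw [Int.le_floor, val, le_div_iff₀ s.Q_cast_pos]
  push_cast
  linarith [s.lt_sqrt_add]

/-- The involution `α ↦ ⌊α⌋ - ᾱ` of the reduced surds. -/
noncomputable def floorSubConj : ReducedSurd D where
  P := ⌊s.val⌋ * s.Q - s.P
  Q := s.Q
  dvd := by
    rw [show (D : ℤ) - (⌊s.val⌋ * s.Q - s.P) ^ 2 =
      D - s.P ^ 2 + s.Q * (2 * ⌊s.val⌋ * s.P - ⌊s.val⌋ ^ 2 * s.Q) by ring]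
    exact dvd_add s.dvd (dvd_mul_right _ _)
  lt_sqrt_add := by
    have hfloor : (1 : ℝ) ≤ ⌊s.val⌋ := by exact_mod_cast s.one_le_floor_val
    push_cast
    nlinarith [s.lt_sqrt, s.Q_cast_pos]
  lt_sqrt := by
    refine lt_of_le_of_ne ?_ fun h ↦ hD.ne_int _ h.symm
    push_cast
    linarith [s.floor_mul_le]
  sqrt_sub_lt := by
    push_cast
    linarith [s.lt_floor_add_one_mul]

lemma floor_val_floorSubConj : ⌊(s.floorSubConj hD).val⌋ = ⌊s.val⌋ := by
  have hval : (s.floorSubConj hD).val = (⌊s.val⌋ * s.Q - s.P + √(D : ℝ)) / s.Q := by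
    simp only [val, floorSubConj, Int.cast_sub, Int.cast_mul]
  rw [hval, Int.floor_eq_iff, le_div_iff₀ s.Q_cast_pos, div_lt_iff₀ s.Q_cast_pos]
  constructor <;> linarith [s.lt_sqrt, s.sqrt_sub_lt]

lemma floorSubConj_involutive : Function.Involutive (floorSubConj hD) := fun s ↦
  ReducedSurd.ext
    (by
      change ⌊(s.floorSubConj hD).val⌋ * s.Q - (⌊s.val⌋ * s.Q - s.P) = s.P
      rw [floor_val_floorSubConj, sub_sub_cancel])
    rfl

/-- The continued fraction step `α ↦ 1 / (α - ⌊α⌋)` on reduced surds, see `val_step`. -/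
noncomputable def step : ReducedSurd D := (s.floorSubConj hD).negInvConj

lemma step_injective : Function.Injective (step hD) :=
  negInvConj_involutive.injective.comp (floorSubConj_involutive hD).injective

lemma val_step : (s.step hD).val = 1 / Int.fract s.val := by
  have hfract : Int.fract s.val = (√(D : ℝ) - (⌊s.val⌋ * s.Q - s.P)) / s.Q := by
    rw [Int.fract, eq_div_iff s.Q_cast_pos.ne', sub_mul, val, div_mul_cancel₀ _ s.Q_cast_pos.ne']
    ring
  rw [step, val_negInvConj, hfract, one_div_div]
  simp only [floorSubConj, Int.cast_sub, Int.cast_mul]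

end Involutions

/-- The reduced surd `√D + ⌊√D⌋`. -/
noncomputable def sqrtAddFloor (hD : Irrational √(D : ℝ)) : ReducedSurd D where
  P := ⌊√(D : ℝ)⌋
  Q := 1
  dvd := one_dvd _
  lt_sqrt_add := by
    have hD0 : D ≠ 0 := by
      rintro rfl
      simp at hD
    have hsqrt : 1 ≤ √(D : ℝ) := Real.one_le_sqrt.2 (Nat.one_le_cast.2 (Nat.pos_of_ne_zero hD0))
    have hfloor : (1 : ℝ) ≤ ⌊√(D : ℝ)⌋ := by exact_mod_cast Int.le_floor.2 (by simpa using hsqrt)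
    push_cast
    linarith
  lt_sqrt := lt_of_le_of_ne (Int.floor_le _) fun h ↦ hD.ne_int _ h.symm
  sqrt_sub_lt := by
    push_cast
    linarith [Int.lt_floor_add_one √(D : ℝ)]

lemma fract_val_sqrtAddFloor (hD : Irrational √(D : ℝ)) :
    Int.fract (sqrtAddFloor hD).val = Int.fract √(D : ℝ) := by
  simp [sqrtAddFloor, val]

lemma cfAlpha_sqrt_succ (hD : Irrational √(D : ℝ)) (k : ℕ) :
    cfAlpha √(D : ℝ) (k + 1) = ((step hD)^[k + 1] (sqrtAddFloor hD)).val := by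
  induction k with
  | zero =>
    rw [Function.iterate_one, val_step, fract_val_sqrtAddFloor]
    rfl
  | succ k ih =>
    rw [Function.iterate_succ_apply', val_step, ← ih]
    rfl

variable (D)

/-- The pairs `(Q, P)` with `0 < Q ≤ 2√D`, `⌊√D⌋ - Q < P ≤ ⌊√D⌋` and `P ^ 2 ≡ D [ZMOD Q]`: a finite
set containing the coefficients of every reduced surd. -/
noncomputable def candidates : Finset (Σ _ : ℕ, ℤ) :=
  (Finset.Ioc 0 ⌊2 * √(D : ℝ)⌋₊).sigma fun Q ↦
    {P ∈ Finset.Ioc (⌊√(D : ℝ)⌋ - Q) ⌊√(D : ℝ)⌋ | (Q : ℤ) ∣ D - P ^ 2}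

variable {D}

/-- The coefficients of a reduced surd, as an element of `candidates D`. -/
def toCandidate (s : ReducedSurd D) : Σ _ : ℕ, ℤ := ⟨s.Q.natAbs, s.P⟩

lemma toCandidate_mem (s : ReducedSurd D) : s.toCandidate ∈ candidates D := by
  have hQ : (s.Q.natAbs : ℤ) = s.Q := Int.natAbs_of_nonneg s.Q_pos.le
  have hQ' : (s.Q.natAbs : ℝ) = s.Q := by rw [← Int.cast_natCast, hQ]
  simp only [candidates, toCandidate, Finset.mem_sigma, Finset.mem_filter, Finset.mem_Ioc, hQ]
  refine ⟨⟨Int.natAbs_pos.2 s.Q_pos.ne', Nat.le_floor ?_⟩, ⟨?_, Int.le_floor.2 s.lt_sqrt.le⟩, s.dvd⟩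
  · linarith [s.lt_sqrt_add, s.lt_sqrt]
  · rify
    linarith [Int.floor_le √(D : ℝ), s.sqrt_sub_lt]

lemma toCandidate_injective : Function.Injective (toCandidate (D := D)) := fun s t h ↦ by
  obtain ⟨hQ, hP⟩ : s.Q.natAbs = t.Q.natAbs ∧ s.P = t.P := by simpa [toCandidate] using h
  exact ReducedSurd.ext hP (Int.natAbs_inj_of_nonneg_of_nonneg s.Q_pos.le t.Q_pos.le |>.1 hQ)

lemma codRestrict_toCandidate_injective :
    Function.Injective (Set.codRestrict toCandidate (candidates D) toCandidate_mem) :=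
  toCandidate_injective.codRestrict _

instance : Finite (ReducedSurd D) := Finite.of_injective _ codRestrict_toCandidate_injective

lemma natCard_le_card_candidates : Nat.card (ReducedSurd D) ≤ (candidates D).card := by
  simpa using Nat.card_le_card_of_injective _ (codRestrict_toCandidate_injective (D := D))

end ReducedSurd

lemma cfPeriod_sqrt_le_natCard {D : ℕ} (hD : Irrational √(D : ℝ)) :
    cfPeriod √(D : ℝ) ≤ Nat.card (ReducedSurd D) :=
  cfPeriod_le_natCard (ReducedSurd.step_injective hD) (ReducedSurd.cfAlpha_sqrt_succ hD)

lemma natCard_reducedSurd_le {D : ℕ} (hD : Squarefree D) :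
    Nat.card (ReducedSurd D) ≤ 2 * ∑ Q ∈ Finset.Ioc 0 ⌊2 * √(D : ℝ)⌋₊, Q.divisors.card := by
  refine ReducedSurd.natCard_le_card_candidates.trans ?_
  rw [ReducedSurd.candidates, Finset.card_sigma, Finset.mul_sum]
  exact Finset.sum_le_sum fun Q _ ↦ card_filter_dvd_sub_sq_le (Int.squarefree_natCast.2 hD) Q _

theorem stmt_17 :
    ∃ C : ℝ, 0 < C ∧ ∀ D : ℕ, Squarefree D → 1 < D →
      (cfPeriod (Real.sqrt D) : ℝ) ≤ C * Real.sqrt D * Real.log D := by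
  refine ⟨12, by norm_num, fun D hsq hD ↦ ?_⟩
  have hD2 : (2 : ℝ) ≤ D := by exact_mod_cast hD
  have hsqrt : 1 ≤ √(D : ℝ) := Real.one_le_sqrt.2 (by linarith)
  calc
    (cfPeriod √(D : ℝ) : ℝ) ≤ Nat.card (ReducedSurd D) :=
      mod_cast cfPeriod_sqrt_le_natCard (irrational_sqrt_of_squarefree hsq hD.ne')
    _ ≤ 2 * ∑ Q ∈ Finset.Ioc 0 ⌊2 * √(D : ℝ)⌋₊, (Q.divisors.card : ℝ) :=
      mod_cast natCard_reducedSurd_le hsq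
    _ ≤ 2 * (2 * √(D : ℝ) * (1 + Real.log (2 * √(D : ℝ)))) := by
      gcongr
      exact sum_card_divisors_le (by linarith)
    _ ≤ 2 * (2 * √(D : ℝ) * (3 * Real.log D)) := by
      gcongr
      exact one_add_log_two_mul_sqrt_le hD2
    _ = 12 * √(D : ℝ) * Real.log D := by ring
end
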